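/- Let V ∈ ℝ[x₁,…,x_n] be a polynomial satisfying V(x) ≥ ε(xᵀx)^α for all x ∈ ℝⁿ (for some ε > 0 and positive integer α) and V(0) = 0, and let ρ > 0, κ_V > 0. Then the CLF condition — for every x with V(x) < ρ and x ≠ 0 there exists u ∈ 𝒰 with V̇(x,u) < −κ_V V(x) — holds if and only if there exist a natural number k and polynomials q, r in preorder(V̇(x,u¹)+κ_V V, …, V̇(x,uᵐ)+κ_V V) such that q(x)·(V(x)−ρ)·(xᵀx) = ((V(x)−ρ)·(xᵀx))^{2k} + r(x) as polynomials. -/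

import Mathlib

open MvPolynomial Finset

/-- A polynomial is a sum of squares. -/
def IsSOS {n : ℕ} (p : MvPolynomial (Fin n) ℝ) : Prop :=
  ∃ (N : ℕ) (q : Fin N → MvPolynomial (Fin n) ℝ), p = ∑ i, (q i) ^ 2

/-- Membership in the preorder generated by `b₁, …, bₘ`. -/
def InPreorder {n m : ℕ} (b : Fin m → MvPolynomial (Fin n) ℝ)
    (p : MvPolynomial (Fin n) ℝ) : Prop :=
  ∃ σ : Finset (Fin m) → MvPolynomial (Fin n) ℝ,
    (∀ J, IsSOS (σ J)) ∧ p = ∑ J : Finset (Fin m), σ J * ∏ i ∈ J, b i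

/-- `V̇(x,u) = ∇V(x)ᵀ(f(x) + g(x)u)` as a polynomial in `x`, for a fixed input vector `u`. -/
noncomputable def VdotPoly {n nu : ℕ} (V : MvPolynomial (Fin n) ℝ)
    (f : Fin n → MvPolynomial (Fin n) ℝ) (g : Fin n → Fin nu → MvPolynomial (Fin n) ℝ)
    (u : Fin nu → ℝ) : MvPolynomial (Fin n) ℝ :=
  ∑ i, pderiv i V * (f i + ∑ j, C (u j) * g i j)

/-- `V̇(x,u)` evaluated at the state `x`. -/
noncomputable def VdotFun {n nu : ℕ} (V : MvPolynomial (Fin n) ℝ)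
    (f : Fin n → MvPolynomial (Fin n) ℝ) (g : Fin n → Fin nu → MvPolynomial (Fin n) ℝ)
    (x : Fin n → ℝ) (u : Fin nu → ℝ) : ℝ :=
  eval x (VdotPoly V f g u)

/-!
Since `V̇(x, u)` is affine in `u`, its minimum over the convex hull is attained at a vertex. With
`bᵢ = V̇(x, uⁱ) + κ V` and `p = (V - ρ) xᵀx`, the CLF condition therefore says that `p ≥ 0` wherever
all `bᵢ ≥ 0`, and the certificate is the one provided by the Positivstellensatz.

If there is no certificate, then the preorder of the `bᵢ` with `-p` adjoined contains no
`-p ^ (2 * k)`. By Zorn's lemma it lies in an ordering of `ℝ[x]` whose support, a prime ideal,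
avoids `p`. Let `K` be a real closed extension of the residue field of the support. The point of
`Kⁿ` given by the classes of the variables satisfies `bᵢ ≥ 0` and `p < 0`, and it remains to find a
real point like it.

For every `y ∈ Kⁿ` and finitely many polynomials over `ℝ`, some `x ∈ ℝⁿ` gives all of them the signs
they have at `y`. This goes by induction on `n`. Points matching the first coordinates on ever
larger finite sets of polynomials combine into a point over an ultrapower `L` of `ℝ`, which matches
them on all polynomials at once. The resulting order isomorphism between subfields of `K` and `L`
extends to a maximal one, whose domain `G` contains all roots in `K` of polynomials over `G`. The
last coordinate can then be replaced by an element of `G`, which maps to `L` and hence gives real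
numbers.
-/

section IntermediateValue

open scoped Polynomial

/-- The intermediate value property for polynomials over an ordered field `K`. The ordered fields
with this property are the real closed fields, and it is the only way real closedness enters. -/
def HasIVT (K : Type*) [Field K] [LinearOrder K] : Prop :=
  ∀ (f : K[X]) (a b : K), a < b → f.eval a * f.eval b < 0 → ∃ c ∈ Set.Ioo a b, f.eval c = 0

theorem hasIVT_real : HasIVT ℝ := by
  intro f a b hab h
  rcases mul_neg_iff.1 h with ⟨ha, hb⟩ | ⟨ha, hb⟩
  · exact intermediate_value_Ioo' hab.le f.continuousOn ⟨hb, ha⟩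
  · exact intermediate_value_Ioo hab.le f.continuousOn ⟨ha, hb⟩

theorem exists_eq_X_sub_C_pow_mul_X_sub_C_pow_mul {K : Type*} [Field K] {f : K[X]} (hf : f ≠ 0)
    {a b : K} (hab : a ≠ b) (ha : f.eval a = 0) (hb : f.eval b = 0) :
    ∃ (m n : ℕ) (g : K[X]), g.eval a ≠ 0 ∧ g.eval b ≠ 0 ∧
      f = (Polynomial.X - Polynomial.C a) ^ (m + 1) * (Polynomial.X - Polynomial.C b) ^ (n + 1)
        * g := by
  obtain ⟨f₁, hff₁, hf₁⟩ := f.exists_eq_pow_rootMultiplicity_mul_and_not_dvd hf a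
  have hf₁0 : f₁ ≠ 0 := by rintro rfl; simp at hf₁
  have hf₁b : f₁.eval b = 0 := by
    rw [hff₁] at hb
    simpa [sub_eq_zero, hab.symm] using hb
  obtain ⟨g, hf₁g, hg⟩ := f₁.exists_eq_pow_rootMultiplicity_mul_and_not_dvd hf₁0 b
  obtain ⟨m, hm⟩ := Nat.exists_eq_add_one.2 ((Polynomial.rootMultiplicity_pos hf).2 ha)
  obtain ⟨n, hn⟩ := Nat.exists_eq_add_one.2 ((Polynomial.rootMultiplicity_pos hf₁0).2 hf₁b)
  rw [hm] at hff₁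
  rw [hn] at hf₁g
  refine ⟨m, n, g, fun hga => hf₁ ?_, fun hgb => hg (Polynomial.dvd_iff_isRoot.2 hgb), ?_⟩
  · rw [Polynomial.dvd_iff_isRoot, Polynomial.IsRoot.def, hf₁g, Polynomial.eval_mul, hga, mul_zero]
  · rw [hff₁, hf₁g, mul_assoc]

theorem derivative_X_sub_C_pow_mul_X_sub_C_pow_mul {K : Type*} [CommRing K] (a b : K) (m n : ℕ)
    (g : K[X]) :
    ((Polynomial.X - Polynomial.C a) ^ (m + 1) * (Polynomial.X - Polynomial.C b) ^ (n + 1)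
        * g).derivative
      = (Polynomial.X - Polynomial.C a) ^ m * (Polynomial.X - Polynomial.C b) ^ n
        * (((m : K[X]) + 1) * (Polynomial.X - Polynomial.C b) * g
          + ((n : K[X]) + 1) * (Polynomial.X - Polynomial.C a) * g
          + (Polynomial.X - Polynomial.C a) * (Polynomial.X - Polynomial.C b) * g.derivative) := by
  simp only [Polynomial.derivative_mul, Polynomial.derivative_X_sub_C_pow, Nat.add_sub_cancel]
  push_cast
  simp only [map_add, map_natCast, map_one]
  ring

variable {K : Type*} [Field K] [LinearOrder K] [IsStrictOrderedRing K]

theorem HasIVT.sign_eval_eq (hK : HasIVT K) (f : K[X]) {s : Set K} (hs : s.OrdConnected)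
    (hf : ∀ c ∈ s, f.eval c ≠ 0) {a b : K} (ha : a ∈ s) (hb : b ∈ s) :
    SignType.sign (f.eval a) = SignType.sign (f.eval b) := by
  wlog hab : a ≤ b
  · exact (this hK f hs hf hb ha (le_of_not_ge hab)).symm
  rcases hab.eq_or_lt with rfl | hab
  · rfl
  by_contra hne
  have hneg : f.eval a * f.eval b < 0 := by
    rcases lt_or_gt_of_ne (hf a ha) with h₁ | h₁ <;> rcases lt_or_gt_of_ne (hf b hb) with h₂ | h₂
    · simp [sign_neg, h₁, h₂] at hne
    · exact mul_neg_of_neg_of_pos h₁ h₂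
    · exact mul_neg_of_pos_of_neg h₁ h₂
    · simp [sign_pos, h₁, h₂] at hne
  obtain ⟨c, hc, hfc⟩ := hK f a b hab hneg
  exact hf c (hs.out ha hb ⟨hc.1.le, hc.2.le⟩) hfc

theorem HasIVT.mul_pos_of_forall_ne_zero (hK : HasIVT K) {f : K[X]} {a b : K} (hab : a ≤ b)
    (hf : ∀ c ∈ Set.Icc a b, f.eval c ≠ 0) : 0 < f.eval a * f.eval b := by
  have ha := Set.left_mem_Icc.2 hab
  have h := hK.sign_eval_eq f Set.ordConnected_Icc hf ha (Set.right_mem_Icc.2 hab)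
  rw [← sign_eq_one_iff, sign_mul, ← h, ← sign_mul, sign_eq_one_iff]
  exact mul_self_pos.2 (hf a ha)

theorem HasIVT.exists_derivative_eq_zero_of_consecutive_roots (hK : HasIVT K) {f : K[X]}
    (hf : f ≠ 0) {a b : K} (hab : a < b) (ha : f.eval a = 0) (hb : f.eval b = 0)
    (hno : ∀ c ∈ Set.Ioo a b, f.eval c ≠ 0) : ∃ c ∈ Set.Ioo a b, f.derivative.eval c = 0 := by
  obtain ⟨m, n, g, hga, hgb, rfl⟩ :=
    exists_eq_X_sub_C_pow_mul_X_sub_C_pow_mul hf hab.ne ha hb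
  have hg : 0 < g.eval a * g.eval b := by
    refine hK.mul_pos_of_forall_ne_zero hab.le fun c hc hgc => ?_
    rcases hc.1.eq_or_lt with rfl | hac
    · exact hga hgc
    rcases hc.2.eq_or_lt with rfl | hcb
    · exact hgb hgc
    exact hno c ⟨hac, hcb⟩ (by simp [hgc])
  rw [derivative_X_sub_C_pow_mul_X_sub_C_pow_mul]
  set h : K[X] := ((m : K[X]) + 1) * (Polynomial.X - Polynomial.C b) * g
    + ((n : K[X]) + 1) * (Polynomial.X - Polynomial.C a) * g
    + (Polynomial.X - Polynomial.C a) * (Polynomial.X - Polynomial.C b) * g.derivative with hh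
  have hsign : h.eval a * h.eval b < 0 := by
    have : h.eval a * h.eval b
        = -((m + 1) * (n + 1) * (b - a) ^ 2 * (g.eval a * g.eval b)) := by
      simp [hh]; ring
    rw [this, neg_lt_zero]
    have := sub_pos.2 hab
    positivity
  obtain ⟨c, hc, hhc⟩ := hK h a b hab hsign
  exact ⟨c, hc, by rw [Polynomial.eval_mul, hhc, mul_zero]⟩

theorem HasIVT.rolle (hK : HasIVT K) {f : K[X]} (hf : f ≠ 0) {a b : K} (hab : a < b)
    (ha : f.eval a = 0) (hb : f.eval b = 0) : ∃ c ∈ Set.Ioo a b, f.derivative.eval c = 0 := by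
  classical
  have hmem : ∀ {c}, c ∈ f.roots.toFinset.filter (a < ·) ↔ f.eval c = 0 ∧ a < c := by simp [hf]
  obtain ⟨b', hb'b, hb'⟩ := Finset.exists_le_minimal _ (hmem.2 ⟨hb, hab⟩)
  obtain ⟨hfb', hab'⟩ := hmem.1 hb'.prop
  obtain ⟨c, hc, hfc⟩ := hK.exists_derivative_eq_zero_of_consecutive_roots hf hab' ha hfb'
    fun c hc hfc => hb'.not_lt (hmem.2 ⟨hfc, hc.1⟩) hc.2
  exact ⟨c, ⟨hc.1, hc.2.trans_le hb'b⟩, hfc⟩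

/-- Dividing `f` by `X - α` leaves a polynomial without roots in `[a, b]`, since another root of `f`
would by Rolle's theorem give a critical point, and so would a double root at `α`. -/
theorem HasIVT.mul_neg_of_root (hK : HasIVT K) {f : K[X]} {a b α : K} (hα : α ∈ Set.Ioo a b)
    (hfα : f.eval α = 0) (hf' : ∀ c ∈ Set.Ioo a b, f.derivative.eval c ≠ 0) :
    f.eval a * f.eval b < 0 := by
  have hf : f ≠ 0 := by rintro rfl; exact hf' α hα (by simp)
  obtain ⟨g, rfl⟩ := Polynomial.dvd_iff_isRoot.2 hfα
  have hg : ∀ c ∈ Set.Icc a b, g.eval c ≠ 0 := by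
    intro c hc hgc
    have hfc : ((Polynomial.X - Polynomial.C α) * g).eval c = 0 := by simp [hgc]
    rcases lt_trichotomy c α with h | rfl | h
    · obtain ⟨d, hd, hd'⟩ := hK.rolle hf h hfc hfα
      exact hf' d ⟨hc.1.trans_lt hd.1, hd.2.trans hα.2⟩ hd'
    · exact hf' c hα (by simp [Polynomial.derivative_mul, hgc])
    · obtain ⟨d, hd, hd'⟩ := hK.rolle hf h hfα hfc
      exact hf' d ⟨hα.1.trans hd.1, hd.2.trans_le hc.2⟩ hd'
  have hpos := hK.mul_pos_of_forall_ne_zero (hα.1.trans hα.2).le hg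
  have : ((Polynomial.X - Polynomial.C α) * g).eval a * ((Polynomial.X - Polynomial.C α) * g).eval b
      = -((α - a) * (b - α) * (g.eval a * g.eval b)) := by
    simp only [Polynomial.eval_mul, Polynomial.eval_sub, Polynomial.eval_X, Polynomial.eval_C]
    ring
  rw [this, neg_lt_zero]
  exact mul_pos (mul_pos (sub_pos.2 hα.1) (sub_pos.2 hα.2)) hpos

end IntermediateValue

section SignTransfer

open scoped Polynomial

/-- The polynomial `g` over `G` acquires no new roots in the extension `i : G →+* K`. -/
def RootsInRange {G K : Type*} [Field G] [Field K] (i : G →+* K) (g : G[X]) : Prop :=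
  ∀ c, g.eval₂ i c = 0 → c ∈ i.range

variable {G K L : Type*} [Field G] [LinearOrder G]
  [Field K] [LinearOrder K] [IsStrictOrderedRing K]
  [Field L] [LinearOrder L] [IsStrictOrderedRing L]

theorem HasIVT.isSquare_of_nonneg (hK : HasIVT K) {c : K} (hc : 0 ≤ c) : IsSquare c := by
  rcases hc.eq_or_lt with rfl | hc
  · exact IsSquare.zero
  have hneg : (Polynomial.X ^ 2 - Polynomial.C c).eval 0
      * (Polynomial.X ^ 2 - Polynomial.C c).eval (c + 1) < 0 := by
    refine mul_neg_of_neg_of_pos ?_ ?_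
    · simpa using hc
    · simp only [Polynomial.eval_sub, Polynomial.eval_pow, Polynomial.eval_X, Polynomial.eval_C]
      nlinarith
  obtain ⟨e, -, he⟩ := hK _ 0 (c + 1) (by linarith) hneg
  simp only [Polynomial.eval_sub, Polynomial.eval_pow, Polynomial.eval_X, Polynomial.eval_C] at he
  exact ⟨e, by linear_combination -he⟩

theorem HasIVT.sign_eval₂_eq (hK : HasIVT K) {i : G →+* K} (hi : StrictMono i) {h : G[X]}
    (hroot : RootsInRange i h) {s : Set K} (hs : s.OrdConnected)
    (hno : ∀ z, i z ∈ s → h.eval z ≠ 0) {c : K} (hc : c ∈ s) {m : G} (hm : i m ∈ s) :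
    SignType.sign (h.eval₂ i c) = SignType.sign (h.eval m) := by
  rw [← hi.sign_comp, ← Polynomial.eval₂_hom, ← Polynomial.eval_map, ← Polynomial.eval_map]
  refine hK.sign_eval_eq _ hs (fun d hd hhd => ?_) hc hm
  rw [Polynomial.eval_map] at hhd
  obtain ⟨z, rfl⟩ := hroot d hhd
  rw [Polynomial.eval₂_hom, map_eq_zero] at hhd
  exact hno z hd hhd

theorem HasIVT.mul_neg_of_eval₂_eq_zero (hK : HasIVT K) {i : G →+* K} (hi : StrictMono i)
    {f : G[X]} {a b : G} {α : K} (hα : α ∈ Set.Ioo (i a) (i b)) (hfα : f.eval₂ i α = 0)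
    (hf' : ∀ c ∈ Set.Ioo (i a) (i b), f.derivative.eval₂ i c ≠ 0) : f.eval a * f.eval b < 0 := by
  have := hK.mul_neg_of_root (f := f.map i) hα (by rwa [Polynomial.eval_map])
    fun c hc => by simpa [Polynomial.derivative_map, Polynomial.eval_map] using hf' c hc
  rwa [Polynomial.eval_map, Polynomial.eval_map, Polynomial.eval₂_hom, Polynomial.eval₂_hom,
    ← map_mul, ← map_zero i, hi.lt_iff_lt] at this

omit [IsStrictOrderedRing K] in
theorem HasIVT.exists_eval₂_eq_zero (hK : HasIVT K) {i : G →+* K} (hi : StrictMono i)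
    {f : G[X]} {a b : G} (hab : a < b) (hf : f.eval a * f.eval b < 0) :
    ∃ β ∈ Set.Ioo (i a) (i b), f.eval₂ i β = 0 := by
  simp only [← Polynomial.eval_map]
  refine hK (f.map i) _ _ (hi hab) ?_
  rwa [Polynomial.eval_map, Polynomial.eval_map, Polynomial.eval₂_hom, Polynomial.eval₂_hom,
    ← map_mul, ← map_zero i, hi.lt_iff_lt]

variable [IsStrictOrderedRing G]

theorem HasIVT.ringHom_strictMono (hG : HasIVT G) (i : G →+* K) : StrictMono i :=
  (ringHom_monotone (fun _ => hG.isSquare_of_nonneg) i).strictMono_of_injective i.injective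

theorem abs_lt_of_monic_of_eval_eq_zero {f : K[X]} (hf : f.Monic) {y : K} (hy : f.eval y = 0) :
    |y| < 1 + ∑ k ∈ range f.natDegree, |f.coeff k| := by
  by_contra! hle
  have hsum : 0 ≤ ∑ k ∈ range f.natDegree, |f.coeff k| := sum_nonneg fun _ _ => abs_nonneg _
  have hy1 : 1 ≤ |y| := by linarith
  obtain ⟨d, hd⟩ : ∃ d, f.natDegree = d + 1 := Nat.exists_eq_succ_of_ne_zero fun h0 => by
    simp [hf.natDegree_eq_zero.1 h0] at hy
  rw [Polynomial.eval_eq_sum_range, sum_range_succ, hf.coeff_natDegree, one_mul] at hy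
  have hpow : |y| * |y| ^ d ≤ (∑ k ∈ range f.natDegree, |f.coeff k|) * |y| ^ d := calc
    |y| * |y| ^ d = |∑ k ∈ range f.natDegree, f.coeff k * y ^ k| := by
      rw [← pow_succ', ← hd, ← abs_pow, eq_neg_of_add_eq_zero_right hy, abs_neg]
    _ ≤ ∑ k ∈ range f.natDegree, |f.coeff k| * |y| ^ k := by
      simpa only [abs_mul, abs_pow] using
        abs_sum_le_sum_abs (fun k => f.coeff k * y ^ k) (range f.natDegree)
    _ ≤ ∑ k ∈ range f.natDegree, |f.coeff k| * |y| ^ d := by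
      refine sum_le_sum fun k hk => mul_le_mul_of_nonneg_left ?_ (abs_nonneg _)
      have := Finset.mem_range.1 hk
      exact pow_le_pow_right₀ hy1 (by omega)
    _ = _ := (sum_mul _ _ _).symm
  linarith [le_of_mul_le_mul_right hpow (by positivity)]

theorem exists_abs_lt_map_of_monic {f : G[X]} (hf : f.Monic) {i : G →+* K} (hi : StrictMono i)
    {y : K} (hy : f.eval₂ i y = 0) : ∃ M : G, |y| < i M := by
  have habs : ∀ c, |i c| = i |c| := fun c => by
    rw [abs, abs, ← map_neg i, ← hi.monotone.map_sup]
  refine ⟨1 + ∑ k ∈ range f.natDegree, |f.coeff k|, ?_⟩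
  simpa [hf.natDegree_map, habs] using
    abs_lt_of_monic_of_eval_eq_zero (hf.map i) (by rwa [Polynomial.eval_map])

theorem exists_bracket {α β : Type*} [LinearOrder α] [LinearOrder β] {i : α → β}
    (hi : StrictMono i) {t : β} (ht : t ∉ Set.range i) {a₀ b₀ : α} (h₀ : t ∈ Set.Ioo (i a₀) (i b₀))
    (Z : Finset α) : ∃ a b, t ∈ Set.Ioo (i a) (i b) ∧ ∀ z ∈ Z, z ∉ Set.Ioo a b := by
  classical
  induction Z using Finset.induction_on with
  | empty => exact ⟨a₀, b₀, h₀, by simp⟩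
  | insert z Z _ ih =>
    obtain ⟨a, b, hab, hZ⟩ := ih
    rcases lt_or_gt_of_ne (fun h => ht ⟨z, h⟩ : i z ≠ t) with hz | hz
    · refine ⟨max a z, b, ⟨by rw [hi.monotone.map_max]; exact max_lt hab.1 hz, hab.2⟩, ?_⟩
      simp only [Finset.mem_insert, forall_eq_or_imp, Set.mem_Ioo, max_lt_iff]
      exact ⟨fun h => lt_irrefl z h.1.2, fun w hw h => hZ w hw ⟨h.1.1, h.2⟩⟩
    · refine ⟨a, min b z, ⟨hab.1, by rw [hi.monotone.map_min]; exact lt_min hab.2 hz⟩, ?_⟩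
      simp only [Finset.mem_insert, forall_eq_or_imp, Set.mem_Ioo, lt_min_iff]
      exact ⟨fun h => lt_irrefl z h.2.2, fun w hw h => hZ w hw ⟨h.1, h.2.1⟩⟩

theorem HasIVT.exists_sign_eval_eq (hK : HasIVT K) {i : G →+* K} (hi : StrictMono i)
    {s : Finset G[X]} (hs : ∀ g ∈ s, g ≠ 0 → RootsInRange i g) (t : K) :
    ∃ m, ∀ g ∈ s, SignType.sign (g.eval m) = SignType.sign (g.eval₂ i t) := by
  classical
  by_cases ht : t ∈ i.range
  · obtain ⟨m, rfl⟩ := ht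
    exact ⟨m, fun g _ => by rw [Polynomial.eval₂_hom, hi.sign_comp]⟩
  let Z := s.biUnion fun g => g.roots.toFinset
  obtain ⟨m, hlo, hhi⟩ := Order.exists_between_finsets (Z.filter (i · < t)) (Z.filter (t < i ·))
    fun x hx y hy => hi.lt_iff_lt.1
      ((Finset.mem_filter.1 hx).2.trans (Finset.mem_filter.1 hy).2)
  refine ⟨m, fun g hg => ?_⟩
  rcases eq_or_ne g 0 with rfl | hg0
  · simp
  refine (hK.sign_eval₂_eq hi (hs g hg hg0) Set.ordConnected_uIcc (fun z hz hgz => ?_)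
    Set.left_mem_uIcc Set.right_mem_uIcc).symm
  have hzZ : z ∈ Z := Finset.mem_biUnion.2 ⟨g, hg, by simpa [hg0] using hgz⟩
  rcases lt_or_gt_of_ne (fun h => ht ⟨z, h⟩ : i z ≠ t) with hzt | hzt
  · exact (Set.mem_uIcc.1 hz).elim (fun h => h.1.not_gt hzt)
      fun h => h.1.not_gt (hi (hlo z (Finset.mem_filter.2 ⟨hzZ, hzt⟩)))
  · exact (Set.mem_uIcc.1 hz).elim
      (fun h => h.2.not_gt (hi (hhi z (Finset.mem_filter.2 ⟨hzZ, hzt⟩)))) fun h => h.2.not_gt hzt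

variable {i : G →+* K} {j : G →+* L}

theorem exists_sign_eval₂_eq_of_rootsInRange (hK : HasIVT K) (hL : HasIVT L) (hi : StrictMono i)
    (hj : StrictMono j) {α : K} (hα : α ∉ i.range) {M : G} (hM : |α| < i M) {s : Finset G[X]}
    (hs : ∀ g ∈ s, g ≠ 0 → RootsInRange i g ∧ RootsInRange j g) :
    ∃ a b m, α ∈ Set.Ioo (i a) (i b) ∧ m ∈ Set.Ioo a b ∧ ∀ g ∈ s, g ≠ 0 → g.eval m ≠ 0 ∧
      (∀ c ∈ Set.Ioo (i a) (i b), SignType.sign (g.eval₂ i c) = SignType.sign (g.eval m)) ∧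
      (∀ c ∈ Set.Ioo (j a) (j b), SignType.sign (g.eval₂ j c) = SignType.sign (g.eval m)) := by
  classical
  obtain ⟨a, b, hab, hZ⟩ := exists_bracket hi hα (a₀ := -M) (b₀ := M)
    (by simpa using abs_lt.1 hM) (s.biUnion fun g => g.roots.toFinset)
  obtain ⟨m, hm⟩ := exists_between (hi.lt_iff_lt.1 (hab.1.trans hab.2))
  refine ⟨a, b, m, hab, hm, fun g hg hg0 => ?_⟩
  have hno : ∀ z ∈ Set.Ioo a b, g.eval z ≠ 0 := fun z hz hgz =>
    hZ z (Finset.mem_biUnion.2 ⟨g, hg, by simpa [hg0] using hgz⟩) hz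
  exact ⟨hno m hm, fun c hc => hK.sign_eval₂_eq hi (hs g hg hg0).1 Set.ordConnected_Ioo
      (fun z hz => hno z ⟨hi.lt_iff_lt.1 hz.1, hi.lt_iff_lt.1 hz.2⟩) hc ⟨hi hm.1, hi hm.2⟩,
    fun c hc => hL.sign_eval₂_eq hj (hs g hg hg0).2 Set.ordConnected_Ioo
      (fun z hz => hno z ⟨hj.lt_iff_lt.1 hz.1, hj.lt_iff_lt.1 hz.2⟩) hc ⟨hj hm.1, hj hm.2⟩⟩

/-- The derivative of `f` and the remainders `g %ₘ f` have smaller degree, so they keep their signs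
on an interval around `α` with end points in `G`. Hence `f` changes sign on it, in `L` as well. -/
theorem exists_root_sign_eq_on_finset (hK : HasIVT K) (hL : HasIVT L) (hi : StrictMono i)
    (hj : StrictMono j) {f : G[X]} (hf : f.Monic)
    (hlow : ∀ g : G[X], g ≠ 0 → g.natDegree < f.natDegree → RootsInRange i g ∧ RootsInRange j g)
    {α : K} (hα : f.eval₂ i α = 0) (hαi : α ∉ i.range) (s : Finset G[X]) :
    ∃ β, f.eval₂ j β = 0 ∧
      ∀ g ∈ s, SignType.sign (g.eval₂ i α) = SignType.sign (g.eval₂ j β) := by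
  classical
  have hf1 : f ≠ 1 := by rintro rfl; simp at hα
  have hdeg : f.natDegree ≠ 0 := fun h => hf1 (hf.natDegree_eq_zero.1 h)
  have hf' : f.derivative ≠ 0 := fun h => hdeg (Polynomial.derivative_eq_zero.1 h)
  obtain ⟨M, hM⟩ := exists_abs_lt_map_of_monic hf hi hα
  obtain ⟨a, b, m, hab, hm, hsign⟩ := exists_sign_eval₂_eq_of_rootsInRange hK hL hi hj hαi hM
    (s := insert f.derivative (s.image (· %ₘ f))) fun g hg hg0 => hlow g hg0 <| by
      obtain rfl | ⟨g', -, rfl⟩ := by simpa using hg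
      · exact Polynomial.natDegree_derivative_lt hdeg
      · exact Polynomial.natDegree_modByMonic_lt g' hf hf1
  obtain ⟨hf'm, hf'K, -⟩ := hsign _ (Finset.mem_insert_self _ _) hf'
  have hneg : f.eval a * f.eval b < 0 := hK.mul_neg_of_eval₂_eq_zero hi hab hα fun c hc => by
    rwa [← sign_ne_zero, hf'K c hc, sign_ne_zero]
  obtain ⟨β, hβ, hfβ⟩ := hL.exists_eval₂_eq_zero hj (hm.1.trans hm.2) hneg
  refine ⟨β, hfβ, fun g hg => ?_⟩
  rw [← Polynomial.eval₂_modByMonic_eq_self_of_root hα,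
    ← Polynomial.eval₂_modByMonic_eq_self_of_root hfβ]
  rcases eq_or_ne (g %ₘ f) 0 with h0 | h0
  · simp [h0]
  obtain ⟨-, hgK, hgL⟩ := hsign (g %ₘ f)
    (Finset.mem_insert_of_mem (Finset.mem_image_of_mem (· %ₘ f) hg)) h0
  rw [hgK α hab, hgL β hβ]

theorem exists_root_sign_eq (hK : HasIVT K) (hL : HasIVT L) (hi : StrictMono i)
    (hj : StrictMono j) {f : G[X]} (hf : f.Monic)
    (hlow : ∀ g : G[X], g ≠ 0 → g.natDegree < f.natDegree → RootsInRange i g ∧ RootsInRange j g)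
    {α : K} (hα : f.eval₂ i α = 0) (hαi : α ∉ i.range) :
    ∃ β, ∀ g : G[X], SignType.sign (g.eval₂ i α) = SignType.sign (g.eval₂ j β) := by
  classical
  by_contra! hbad
  choose g hg using hbad
  obtain ⟨β, hβ, hβg⟩ := exists_root_sign_eq_on_finset hK hL hi hj hf hlow hα hαi
    ((f.map j).roots.toFinset.image g)
  refine hg β (hβg _ (Finset.mem_image_of_mem g ?_))
  simpa [(hf.map j).ne_zero, Polynomial.eval_map] using hβ

theorem rootsInRange_of_maximal (hK : HasIVT K) (hL : HasIVT L) (hi : StrictMono i)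
    (hj : StrictMono j)
    (hmax : ∀ α β, (∀ g : G[X], SignType.sign (g.eval₂ i α) = SignType.sign (g.eval₂ j β)) →
      α ∈ i.range ∧ β ∈ j.range) {f : G[X]} (hf : f ≠ 0) :
    RootsInRange i f ∧ RootsInRange j f := by
  induction hd : f.natDegree using Nat.strong_induction_on generalizing f with
  | h d ih =>
    set f₁ := f * Polynomial.C f.leadingCoeff⁻¹ with hf₁
    have hmonic : f₁.Monic := Polynomial.monic_mul_leadingCoeff_inv hf
    have hdeg : f₁.natDegree = d := by
      rw [hf₁, Polynomial.natDegree_mul_C (inv_ne_zero (Polynomial.leadingCoeff_ne_zero.2 hf)), hd]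
    have hlow : ∀ g : G[X], g ≠ 0 → g.natDegree < f₁.natDegree →
        RootsInRange i g ∧ RootsInRange j g := fun g hg h => ih _ (hdeg ▸ h) hg rfl
    constructor
    · intro c hc
      by_contra hci
      obtain ⟨β, hs⟩ := exists_root_sign_eq hK hL hi hj hmonic hlow
        (by rw [hf₁, Polynomial.eval₂_mul, hc, zero_mul]) hci
      exact hci (hmax c β hs).1
    · intro c hc
      by_contra hci
      obtain ⟨β, hs⟩ := exists_root_sign_eq hL hK hj hi hmonic
        (fun g hg h => (hlow g hg h).symm)
        (by rw [hf₁, Polynomial.eval₂_mul, hc, zero_mul]) hci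
      exact hci (hmax β c fun g => (hs g).symm).2

end SignTransfer

section PartialEmbeddings

open IntermediateField
open scoped Polynomial

theorem sign_div_eq_sign_mul {M : Type*} [Field M] [LinearOrder M] [IsStrictOrderedRing M]
    (a b : M) : SignType.sign (a / b) = SignType.sign (a * b) := by
  obtain rfl | hb := eq_or_ne b 0
  · simp
  · rw [show a * b = a / b * b ^ 2 by field_simp, sign_mul (a / b), sign_pos (sq_pos_of_ne_zero hb),
      mul_one]

theorem strictMono_iff_forall_sign_eq {G L F : Type*} [Ring G] [LinearOrder G]
    [IsStrictOrderedRing G] [Ring L] [LinearOrder L] [IsStrictOrderedRing L] [FunLike F G L]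
    [AddMonoidHomClass F G L] {j : F} :
    StrictMono j ↔ ∀ x, SignType.sign (j x) = SignType.sign x := by
  refine ⟨fun hj x => hj.sign_comp x, fun h x y hxy => ?_⟩
  rwa [← sub_pos, ← sign_eq_one_iff, ← map_sub, h, sign_eq_one_iff, sub_pos]

variable {R K L : Type*} [Field R] [Field K] [LinearOrder K] [IsStrictOrderedRing K]
  [Field L] [LinearOrder L] [IsStrictOrderedRing L] [Algebra R K] [Algebra R L]

theorem exists_residueField_algHom {R A K : Type*} [CommRing R] [CommRing A] [Field K] [Algebra R A]
    [Algebra R K] {I : Ideal A} [I.IsPrime] {φ : A →ₐ[R] K} (hφ : RingHom.ker φ = I) :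
    ∃ Φ : I.ResidueField →ₐ[R] K, ∀ a, Φ (algebraMap A _ a) = φ a :=
  ⟨Ideal.ResidueField.liftₐ I φ hφ.ge fun _ ha => IsUnit.mk0 _ fun h => ha (hφ.le h),
    Ideal.ResidueField.liftₐ_algebraMap _ _ _ _⟩

theorem exists_residueField_eq_div {A : Type*} [CommRing A] {I : Ideal A} [I.IsPrime]
    (x : I.ResidueField) : ∃ a b : A, b ∉ I ∧
      x = algebraMap A I.ResidueField a / algebraMap A I.ResidueField b := by
  obtain ⟨a, b, hb, rfl⟩ := IsFractionRing.div_surjective (A ⧸ I) x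
  obtain ⟨a, rfl⟩ := Ideal.Quotient.mk_surjective a
  obtain ⟨b, rfl⟩ := Ideal.Quotient.mk_surjective b
  exact ⟨a, b, fun h => nonZeroDivisors.ne_zero hb (Ideal.Quotient.eq_zero_iff_mem.2 h), rfl⟩

theorem exists_lift_of_field {F : Type*} [Field F] [Algebra R F] {φ : F →ₐ[R] K} {ψ : F →ₐ[R] L}
    (h : ∀ a, SignType.sign (φ a) = SignType.sign (ψ a)) :
    ∃ x : Lifts R K L, StrictMono x.emb ∧
      ∀ a, ∃ ha : φ a ∈ x.carrier, x.emb ⟨φ a, ha⟩ = ψ a := by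
  let e : F ≃ₐ[R] φ.fieldRange := AlgEquiv.ofInjectiveField φ
  let j : φ.fieldRange →ₐ[R] L := ψ.comp (e.symm : φ.fieldRange →ₐ[R] F)
  have hj (a : F) : j (e a) = ψ a := congrArg ψ (e.symm_apply_apply a)
  refine ⟨⟨φ.fieldRange, j⟩, ?_, fun a => ⟨⟨a, rfl⟩, hj a⟩⟩
  refine strictMono_iff_forall_sign_eq.2 (e.surjective.forall.2 fun a => ?_)
  exact (congrArg SignType.sign (hj a)).trans (h a).symm

theorem exists_lift_of_forall_sign_eq {A : Type*} [CommRing A] [Algebra R A] {φ : A →ₐ[R] K}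
    {ψ : A →ₐ[R] L} (h : ∀ a, SignType.sign (φ a) = SignType.sign (ψ a)) :
    ∃ x : Lifts R K L, StrictMono x.emb ∧
      ∀ a, ∃ ha : φ a ∈ x.carrier, x.emb ⟨φ a, ha⟩ = ψ a := by
  have hker : RingHom.ker ψ = RingHom.ker φ := by
    ext a
    rw [RingHom.mem_ker, RingHom.mem_ker, ← sign_eq_zero_iff, ← h, sign_eq_zero_iff]
  have : (RingHom.ker φ).IsPrime := RingHom.ker_isPrime _
  obtain ⟨Φ, hΦ⟩ := exists_residueField_algHom (φ := φ) rfl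
  obtain ⟨Ψ, hΨ⟩ := exists_residueField_algHom hker
  have hsign (x : (RingHom.ker φ).ResidueField) :
      SignType.sign (Φ x) = SignType.sign (Ψ x) := by
    obtain ⟨a, b, -, rfl⟩ := exists_residueField_eq_div x
    simp only [map_div₀ Φ, map_div₀ Ψ, sign_div_eq_sign_mul, hΦ, hΨ, ← map_mul, h]
  obtain ⟨x, hx, hxΦ⟩ := exists_lift_of_field hsign
  exact ⟨x, hx, fun a => hΦ a ▸ hΨ a ▸ hxΦ (algebraMap A _ a)⟩

theorem exists_lift_ge_mem (x : Lifts R K L) {α : K} {β : L}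
    (h : ∀ g : x.carrier[X], SignType.sign (g.eval₂ (algebraMap x.carrier K) α) =
      SignType.sign (g.eval₂ (x.emb : x.carrier →+* L) β)) :
    ∃ y ≥ x, StrictMono y.emb ∧ ∃ hα : α ∈ y.carrier, y.emb ⟨α, hα⟩ = β := by
  obtain ⟨y, hy, hxy⟩ := exists_lift_of_forall_sign_eq
    (φ := Polynomial.aevalTower x.carrier.val α) (ψ := Polynomial.aevalTower x.emb β) h
  refine ⟨y, ⟨fun a ha => ?_, fun a => ?_⟩, hy, ?_⟩
  · simpa using! (hxy (Polynomial.C ⟨a, ha⟩)).1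
  · simpa using! (hxy (Polynomial.C a)).2
  · simpa using! hxy Polynomial.X

theorem strictMono_union_emb {c : Set (Lifts R K L)} (hc : IsChain (· ≤ ·) c)
    (hne : c.Nonempty) (h : ∀ x ∈ c, StrictMono x.emb) :
    StrictMono (Lifts.union c hc).emb := by
  have : Nonempty c := hne.to_subtype
  have hdir : Directed (· ≤ ·) fun x : c => x.1.carrier :=
    hc.directed.mono_comp _ fun _ _ h => h.1
  refine strictMono_iff_forall_sign_eq.2 fun a => ?_
  have ha : (a : K) ∈ ⋃ i : c, (i.1.carrier : Set K) := by
    rw [← coe_iSup_of_directed hdir, ← Lifts.carrier_union c hc]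
    exact a.2
  obtain ⟨x, hx⟩ := Set.mem_iUnion.1 ha
  have hxa := (Lifts.le_union c hc x.2).2 ⟨a, hx⟩
  exact (congrArg SignType.sign hxa).trans (strictMono_iff_forall_sign_eq.1 (h x x.2) ⟨a, hx⟩)

theorem exists_maximal_strictMono_lift {x : Lifts R K L} (hx : StrictMono x.emb) :
    ∃ y ≥ x, Maximal (fun y : Lifts R K L => StrictMono y.emb) y :=
  zorn_le_nonempty₀ _ (fun c hc hchain y hy =>
    ⟨_, strictMono_union_emb hchain ⟨y, hy⟩ hc, Lifts.le_union c hchain⟩) x hx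

theorem exists_strictMono_lift_rootsInRange (hK : HasIVT K) (hL : HasIVT L)
    {x : Lifts R K L} (hx : StrictMono x.emb) :
    ∃ y ≥ x, StrictMono y.emb ∧ ∀ f : y.carrier[X], f ≠ 0 →
      RootsInRange (algebraMap y.carrier K) f := by
  obtain ⟨y, hxy, hy⟩ := exists_maximal_strictMono_lift hx
  refine ⟨y, hxy, hy.prop, fun f hf => (rootsInRange_of_maximal (j := (y.emb : y.carrier →+* L))
    hK hL (fun _ _ h => h) hy.prop (fun α β h => ?_) hf).1⟩
  obtain ⟨z, hyz, hz, hα, hβ⟩ := exists_lift_ge_mem y h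
  obtain rfl : y = z := hyz.antisymm (hy.le_of_ge hz hyz)
  exact ⟨⟨⟨α, hα⟩, rfl⟩, ⟨⟨α, hα⟩, hβ⟩⟩

theorem exists_sign_eval₂_eq (hK : HasIVT K) (hL : HasIVT L) {A : Type*} [CommRing A] [Algebra R A]
    {φ : A →ₐ[R] K} {ψ : A →ₐ[R] L} (h : ∀ a, SignType.sign (φ a) = SignType.sign (ψ a))
    (t : K) (s : Finset A[X]) : ∃ b : L, ∀ q ∈ s,
      SignType.sign (q.eval₂ (ψ : A →+* L) b) = SignType.sign (q.eval₂ (φ : A →+* K) t) := by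
  classical
  obtain ⟨x, hx, hxφ⟩ := exists_lift_of_forall_sign_eq h
  obtain ⟨y, hxy, hy, hroots⟩ := exists_strictMono_lift_rootsInRange hK hL hx
  let θ : A →+* y.carrier := (φ : A →+* K).codRestrict y.carrier fun a => hxy.1 (hxφ a).1
  have hθφ : (algebraMap y.carrier K).comp θ = φ := rfl
  have hθψ : (y.emb : y.carrier →+* L).comp θ = ψ :=
    RingHom.ext fun a => (hxy.2 _).trans (hxφ a).2
  obtain ⟨m, hm⟩ := hK.exists_sign_eval_eq (i := algebraMap y.carrier K) (fun _ _ h => h)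
    (s := s.image (Polynomial.map θ)) (fun g _ => hroots g) t
  refine ⟨y.emb m, fun q hq => ?_⟩
  rw [← hθφ, ← Polynomial.eval₂_map, ← hm _ (Finset.mem_image_of_mem _ hq), ← hθψ,
    ← Polynomial.eval₂_map]
  exact (congrArg _ (Polynomial.eval₂_at_apply _ _)).trans (strictMono_iff_forall_sign_eq.1 hy _)

end PartialEmbeddings

section Ultrapower

open scoped Polynomial

theorem exists_ultrafilter_forall_eventually {ι X : Type*} {P : ι → X → Prop}
    (h : ∀ s : Finset ι, ∃ x, ∀ i ∈ s, P i x) : ∃ U : Ultrafilter X, ∀ i, ∀ᶠ x in U, P i x := by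
  classical
  choose x hx using h
  refine ⟨(Ultrafilter.of Filter.atTop).map x, fun i => Ultrafilter.of_le Filter.atTop ?_⟩
  filter_upwards [Filter.eventually_ge_atTop {i}] with s hs
  exact hx s i (hs (Finset.mem_singleton_self i))

variable {ι R : Type*} [Field R] (U : Ultrafilter ι)

theorem exists_germ_eval (p : (Filter.Germ (U : Filter ι) R)[X]) :
    ∃ P : ι → R[X], ∀ a : ι → R,
      p.eval (a : Filter.Germ (U : Filter ι) R) = ((fun r => (P r).eval (a r) : ι → R) :) := by
  induction p using Polynomial.induction_on' with
  | add p q hp hq =>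
    obtain ⟨P, hP⟩ := hp
    obtain ⟨Q, hQ⟩ := hq
    refine ⟨fun r => P r + Q r, fun a => ?_⟩
    rw [Polynomial.eval_add, hP, hQ, ← Filter.Germ.coe_add]
    simp only [Polynomial.eval_add]
    rfl
  | monomial n c =>
    induction c using Filter.Germ.inductionOn with
    | _ c =>
    refine ⟨fun r => Polynomial.monomial n (c r), fun a => ?_⟩
    rw [Polynomial.eval_monomial, ← Filter.Germ.coe_pow, ← Filter.Germ.coe_mul]
    simp only [Polynomial.eval_monomial]
    rfl

variable [LinearOrder R]

theorem HasIVT.germ [IsStrictOrderedRing R] (hR : HasIVT R) :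
    HasIVT (Filter.Germ (U : Filter ι) R) := by
  intro f a b hab h
  induction a using Filter.Germ.inductionOn with
  | _ a =>
  induction b using Filter.Germ.inductionOn with
  | _ b =>
  obtain ⟨P, hP⟩ := exists_germ_eval U f
  rw [hP, hP, ← Filter.Germ.coe_mul, ← Filter.Germ.coe_zero, Filter.Germ.coe_lt] at h
  rw [Filter.Germ.coe_lt] at hab
  obtain ⟨c, hc⟩ : ∃ c : ι → R, ∀ᶠ r in (U : Filter ι),
      c r ∈ Set.Ioo (a r) (b r) ∧ (P r).eval (c r) = 0 :=
    ((hab.and h).mono fun r hr => hR (P r) _ _ hr.1 hr.2).choice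
  refine ⟨c, ⟨Filter.Germ.coe_lt.2 (hc.mono fun r hr => hr.1.1),
    Filter.Germ.coe_lt.2 (hc.mono fun r hr => hr.1.2)⟩, ?_⟩
  rw [hP]
  exact Filter.Germ.coe_eq.2 (hc.mono fun r hr => hr.2)

theorem eventually_sign_eq (f : ι → R) :
    ∀ᶠ r in (U : Filter ι),
      SignType.sign (f r) = SignType.sign (f : Filter.Germ (U : Filter ι) R) := by
  rcases lt_trichotomy (f : Filter.Germ (U : Filter ι) R) 0 with h | h | h
  · rw [sign_neg h]
    exact (Filter.Germ.coe_lt.1 h).mono fun r => sign_neg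
  · rw [h, sign_zero]
    exact (Filter.Germ.coe_eq.1 h).mono fun r hr => by rw [hr]; exact sign_zero
  · rw [sign_pos h]
    exact (Filter.Germ.coe_lt.1 h).mono fun r => sign_pos

end Ultrapower

section ArtinLang

variable {R K : Type*} [Field R] [LinearOrder R] [IsStrictOrderedRing R]
  [Field K] [LinearOrder K] [IsStrictOrderedRing K] [Algebra R K]

theorem eval₂_finSuccEquiv {R S : Type*} [CommRing R] [CommRing S] {n : ℕ}
    (ψ : MvPolynomial (Fin n) R →+* S) (b : S) {f : MvPolynomial (Fin (n + 1)) R →+* S}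
    (hC : ∀ r, f (C r) = ψ (C r)) (hzero : f (X 0) = b)
    (hsucc : ∀ k : Fin n, f (X k.succ) = ψ (X k)) (p : MvPolynomial (Fin (n + 1)) R) :
    (finSuccEquiv R n p).eval₂ ψ b = f p := by
  have : (Polynomial.eval₂RingHom ψ b).comp (finSuccEquiv R n : _ →+* _) = f :=
    ringHom_ext (fun r => by simp [hC, finSuccEquiv_apply])
      (Fin.cases (by simp [hzero, finSuccEquiv_X_zero]) fun k => by
        simp [hsucc, finSuccEquiv_X_succ])
  exact RingHom.congr_fun this p

theorem HasIVT.exists_sign_eval_eq_sign_aeval (hR : HasIVT R) (hK : HasIVT K) {n : ℕ}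
    (y : Fin n → K) (s : Finset (MvPolynomial (Fin n) R)) : ∃ x : Fin n → R, ∀ p ∈ s,
      SignType.sign (eval x p) = SignType.sign (aeval y p) := by
  classical
  induction n with
  | zero =>
    refine ⟨0, fun p _ => ?_⟩
    obtain ⟨r, rfl⟩ := C_surjective (Fin 0) p
    rw [eval_C, aeval_C, (hR.ringHom_strictMono (algebraMap R K)).sign_comp]
  | succ n ih =>
    obtain ⟨U, hU⟩ := exists_ultrafilter_forall_eventually (ih (Fin.tail y))
    let ψ : MvPolynomial (Fin n) R →+* Filter.Germ (U : Filter (Fin n → R)) R :=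
      (Filter.Germ.coeRingHom _).comp (RingHom.pi fun x => eval x)
    let := (ψ.comp C).toAlgebra
    have hψ (p) : SignType.sign (aeval (Fin.tail y) p) = SignType.sign (ψ p) := by
      obtain ⟨x, hx, hx'⟩ := ((hU p).and (eventually_sign_eq U fun x => eval x p)).exists
      exact hx.symm.trans hx'
    obtain ⟨b, hb⟩ := exists_sign_eval₂_eq hK (hR.germ U)
      (ψ := ({ ψ with commutes' := fun _ => rfl } : _ →ₐ[R] _)) hψ (y 0)
      (s.image (finSuccEquiv R n))
    induction b using Filter.Germ.inductionOn with
    | _ μ =>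
    have hμ (p : MvPolynomial (Fin (n + 1)) R) : (finSuccEquiv R n p).eval₂ ψ μ =
        ((fun x => eval (Fin.cons (μ x) x) p : (Fin n → R) → R) :) :=
      eval₂_finSuccEquiv ψ _
        (f := (Filter.Germ.coeRingHom _).comp (RingHom.pi fun x => eval (Fin.cons (μ x) x)))
        (fun r => congrArg Filter.Germ.ofFun (funext fun _ => (eval_C r).trans (eval_C r).symm))
        (congrArg Filter.Germ.ofFun (funext fun _ => eval_X 0))
        (fun k => congrArg Filter.Germ.ofFun
          (funext fun _ => (eval_X k.succ).trans (eval_X k).symm)) p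
    have hy (p : MvPolynomial (Fin (n + 1)) R) : (finSuccEquiv R n p).eval₂
        (aeval (Fin.tail y) : _ →ₐ[R] K) (y 0) = aeval y p :=
      eval₂_finSuccEquiv _ _ (f := (aeval y : _ →ₐ[R] K).toRingHom) (by simp) (by simp)
        (by simp [Fin.tail]) p
    obtain ⟨x, hx⟩ := ((Filter.eventually_all_finset s).2 fun p _ =>
      eventually_sign_eq U fun x => eval (Fin.cons (μ x) x) p).exists
    refine ⟨Fin.cons (μ x) x, fun p hp => ?_⟩
    rw [hx p hp, ← hμ, ← hy]
    exact hb _ (Finset.mem_image_of_mem _ hp)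

end ArtinLang

section Orderings

variable {A : Type*} [CommRing A]

/-- The subsemiring `P + P * a` generated by `a` over a subsemiring `P` containing all squares. -/
def adjoinOfSq (P : Subsemiring A) (hP : ∀ a, a ^ 2 ∈ P) (a : A) : Subsemiring A where
  carrier := {x | ∃ s ∈ P, ∃ t ∈ P, x = s + t * a}
  zero_mem' := ⟨0, P.zero_mem, 0, P.zero_mem, by ring⟩
  one_mem' := ⟨1, P.one_mem, 0, P.zero_mem, by ring⟩
  add_mem' := by
    rintro _ _ ⟨s, hs, t, ht, rfl⟩ ⟨s', hs', t', ht', rfl⟩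
    exact ⟨s + s', P.add_mem hs hs', t + t', P.add_mem ht ht', by ring⟩
  mul_mem' := by
    rintro _ _ ⟨s, hs, t, ht, rfl⟩ ⟨s', hs', t', ht', rfl⟩
    exact ⟨s * s' + t * t' * a ^ 2,
      P.add_mem (P.mul_mem hs hs') (P.mul_mem (P.mul_mem ht ht') (hP a)),
      s * t' + t * s', P.add_mem (P.mul_mem hs ht') (P.mul_mem ht hs'), by ring⟩

theorem le_adjoinOfSq {P : Subsemiring A} (hP : ∀ a, a ^ 2 ∈ P) (a : A) :
    P ≤ adjoinOfSq P hP a :=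
  fun s hs => ⟨s, hs, 0, P.zero_mem, by ring⟩

theorem mem_adjoinOfSq {P : Subsemiring A} (hP : ∀ a, a ^ 2 ∈ P) (a : A) :
    a ∈ adjoinOfSq P hP a :=
  ⟨0, P.zero_mem, 1, P.one_mem, by ring⟩

/-- The subsemirings that contain all squares and no negated even power of `p`: the preorderings
that stay proper after inverting `p`, those extendable to orderings with `p` outside the support. -/
def properCones (p : A) : Set (Subsemiring A) :=
  {P | (∀ a, a ^ 2 ∈ P) ∧ ∀ k : ℕ, -p ^ (2 * k) ∉ P}

theorem exists_maximal_properCone {p : A} {S : Subsemiring A} (hS : S ∈ properCones p) :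
    ∃ P, S ≤ P ∧ Maximal (· ∈ properCones p) P := by
  refine zorn_le_nonempty₀ (properCones p) (fun c hc hchain y hy => ⟨sSup c,
    ⟨fun a => le_sSup hy ((hc hy).1 a), fun k hk => ?_⟩, fun _ => le_sSup⟩) S hS
  obtain ⟨P, hP, hkP⟩ := (Subsemiring.mem_sSup_of_directedOn ⟨y, hy⟩ hchain.directedOn).1 hk
  exact (hc hP).2 k hkP

theorem exists_neg_pow_eq_of_notMem {p : A} {P : Subsemiring A}
    (hP : Maximal (· ∈ properCones p) P) {a : A} (ha : a ∉ P) :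
    ∃ k : ℕ, ∃ s ∈ P, ∃ t ∈ P, -p ^ (2 * k) = s + t * a := by
  by_contra! h
  refine ha (hP.2 (y := adjoinOfSq P hP.1.1 a)
    ⟨fun b => le_adjoinOfSq hP.1.1 a (hP.1.1 b), ?_⟩ (le_adjoinOfSq _ _) (mem_adjoinOfSq _ _))
  rintro k ⟨s, hs, t, ht, hst⟩
  exact h k s hs t ht hst

theorem neg_mul_notMem_of_maximal {p : A} {P : Subsemiring A}
    (hP : Maximal (· ∈ properCones p) P) {a b : A} (ha : a ∉ P) (hb : b ∉ P) :
    -(a * b) ∉ P := by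
  intro hab
  obtain ⟨k, s, hs, t, ht, h⟩ := exists_neg_pow_eq_of_notMem hP ha
  obtain ⟨l, s', hs', t', ht', h'⟩ := exists_neg_pow_eq_of_notMem hP hb
  have hpow (k : ℕ) : p ^ (2 * k) ∈ P := by
    rw [mul_comm, pow_mul]; exact hP.1.1 _
  refine hP.1.2 (k + l) ?_
  have : -p ^ (2 * (k + l)) = s * s' + p ^ (2 * k) * s' + s * p ^ (2 * l)
      + t * t' * (-(a * b)) := by
    rw [mul_add, pow_add]
    linear_combination (p ^ (2 * l) + s') * h - (t * a) * h'
  rw [this]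
  exact P.add_mem (P.add_mem (P.add_mem (P.mul_mem hs hs') (P.mul_mem (hpow k) hs'))
    (P.mul_mem hs (hpow l))) (P.mul_mem (P.mul_mem ht ht') hab)

theorem exists_isOrdering_of_mem_properCones {p : A} {S : Subsemiring A}
    (hS : S ∈ properCones p) :
    ∃ (P : RingPreordering A) (_ : P.IsOrdering), S ≤ P.toSubsemiring ∧ p ∉ P.support := by
  obtain ⟨P, hSP, hP⟩ := exists_maximal_properCone hS
  let P' : RingPreordering A :=
    { P with
      mem_of_isSquare' := by
        rintro _ ⟨a, rfl⟩
        exact sq a ▸ hP.1.1 a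
      neg_one_notMem' := fun h => hP.1.2 0 (by rwa [mul_zero, pow_zero]) }
  have hP' : P'.IsOrdering := RingPreordering.isOrdering_iff.2 fun a b hab => by
    by_contra! h
    exact neg_mul_notMem_of_maximal hP h.1 h.2 hab
  refine ⟨P', hP', hSP, fun hp => hP.1.2 1 ?_⟩
  rw [show -p ^ (2 * 1) = -p * p by ring]
  exact P.mul_mem hp.2 hp.1

theorem exists_linearOrder_nonneg {F : Type*} [Field F] (T : RingPreordering F) :
    ∃ _ : LinearOrder F, IsStrictOrderedRing F ∧ ∀ x ∈ T, 0 ≤ x := by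
  obtain ⟨P, hP, hTP, -⟩ := exists_isOrdering_of_mem_properCones (p := (1 : F))
    (S := T.toSubsemiring) ⟨T.pow_two_mem, fun k => by rw [one_pow]; exact T.neg_one_notMem⟩
  classical
  let cone : RingCone F :=
    { P.toSubsemiring with
      eq_zero_of_mem_of_neg_mem' := RingPreordering.eq_zero_of_mem_of_neg_mem (P := P) }
  have : HasMemOrNegMem cone := ⟨hP.mem_or_neg_mem⟩
  let : LinearOrder F := LinearOrder.mkOfAddGroupCone cone
  have : IsOrderedRing F := IsOrderedRing.mkOfCone cone
  refine ⟨_, IsOrderedRing.toIsStrictOrderedRing F, fun x hx => ?_⟩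
  have : x - 0 ∈ cone := (sub_zero x).symm ▸ hTP hx
  exact this

/-- The preordering induced by an ordering of a ring on the residue field at its support: the
fractions `a / b ^ 2` with `a` in the ordering. -/
def residuePreordering (P : RingPreordering A) [P.IsOrdering] :
    RingPreordering P.support.ResidueField :=
  let π := algebraMap A P.support.ResidueField
  have hmul {b c : A} (hb : b ∉ P.support) (hc : c ∉ P.support) : b * c ∉ P.support :=
    fun h => (Ideal.IsPrime.mem_or_mem inferInstance h).elim hb hc
  RingPreordering.mk' {x | ∃ a ∈ P, ∃ b ∉ P.support, x * π b ^ 2 = π a}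
    (by
      rintro x y ⟨a, ha, b, hb, hx⟩ ⟨a', ha', b', hb', hy⟩
      refine ⟨a * b' ^ 2 + a' * b ^ 2, add_mem (mul_mem ha (P.pow_two_mem _))
        (mul_mem ha' (P.pow_two_mem _)), b * b', hmul hb hb', ?_⟩
      simp only [map_add, map_mul, map_pow, ← hx, ← hy]
      ring)
    (by
      rintro x y ⟨a, ha, b, hb, hx⟩ ⟨a', ha', b', hb', hy⟩
      refine ⟨a * a', mul_mem ha ha', b * b', hmul hb hb', ?_⟩
      simp only [map_mul, ← hx, ← hy]
      ring)
    (fun x => by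
      obtain ⟨a, b, hb, rfl⟩ := exists_residueField_eq_div x
      have hb' : π b ≠ 0 := fun h => hb (Ideal.algebraMap_residueField_eq_zero.1 h)
      exact ⟨a * a, P.mul_self_mem a, b, hb, by
        rw [← sq, ← mul_pow, div_mul_cancel₀ _ hb', ← sq, map_pow]⟩)
    (by
      rintro ⟨a, ha, b, hb, h⟩
      have hab : a + b ^ 2 ∈ P.support := Ideal.algebraMap_residueField_eq_zero.1 (by
        rw [map_add, map_pow]; linear_combination -h)
      have hb2 : b ^ 2 ∈ P.support := RingPreordering.mem_support.2 ⟨P.pow_two_mem b, by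
        rw [show -b ^ 2 = -(a + b ^ 2) + a by ring]
        exact add_mem hab.2 ha⟩
      exact hb (Ideal.IsPrime.mem_of_pow_mem inferInstance 2 hb2))

theorem algebraMap_mem_residuePreordering {P : RingPreordering A} [P.IsOrdering] {a : A}
    (ha : a ∈ P) : algebraMap A P.support.ResidueField a ∈ residuePreordering P :=
  ⟨a, ha, 1, RingPreordering.one_notMem_support P, by simp⟩

end Orderings

section WeightedSquares

/-- The sums of elements `c • a ^ 2` with `0 ≤ c`, for an algebra `A` over an ordered field `F`.
If `A` is a field, the order of `F` extends to `A` unless `-1` is such a sum. -/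
def weightedSquares (F A : Type*) [Field F] [LinearOrder F] [IsStrictOrderedRing F] [CommRing A]
    [Algebra F A] : Subsemiring A :=
  Submonoid.subsemiringClosure
    { carrier := {x | ∃ c : F, 0 ≤ c ∧ ∃ a : A, x = c • a ^ 2}
      one_mem' := ⟨1, zero_le_one, 1, by simp⟩
      mul_mem' := by
        rintro _ _ ⟨c, hc, a, rfl⟩ ⟨c', hc', a', rfl⟩
        exact ⟨c * c', mul_nonneg hc hc', a * a', by rw [smul_mul_smul_comm, mul_pow]⟩ }

variable {F A B : Type*} [Field F] [LinearOrder F] [IsStrictOrderedRing F] [CommRing A]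
  [Algebra F A] [CommRing B] [Algebra F B]

theorem weightedSquares_induction {p : A → Prop} (zero : p 0)
    (add : ∀ x y, p x → p y → p (x + y)) (smul_sq : ∀ (c : F) (a : A), 0 ≤ c → p (c • a ^ 2))
    {x : A} (hx : x ∈ weightedSquares F A) : p x := by
  rw [weightedSquares, Submonoid.subsemiringClosure_mem] at hx
  induction hx using AddSubmonoid.closure_induction with
  | mem x hx =>
    obtain ⟨c, hc, a, rfl⟩ := hx
    exact smul_sq c a hc
  | zero => exact zero
  | add x y _ _ hx hy => exact add x y hx hy

theorem smul_sq_mem_weightedSquares {c : F} (hc : 0 ≤ c) (a : A) :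
    c • a ^ 2 ∈ weightedSquares F A := by
  rw [weightedSquares, Submonoid.subsemiringClosure_mem]
  exact AddSubmonoid.subset_closure ⟨c, hc, a, rfl⟩

theorem map_mem_weightedSquares (φ : A →ₐ[F] B) {x : A} (hx : x ∈ weightedSquares F A) :
    φ x ∈ weightedSquares F B := by
  refine weightedSquares_induction (p := fun x => φ x ∈ weightedSquares F B) ?_ ?_ ?_ hx
  · rw [map_zero]; exact zero_mem _
  · intro x y hx hy
    rw [map_add]; exact add_mem hx hy
  · intro c a hc
    rw [map_smul, map_pow]; exact smul_sq_mem_weightedSquares hc _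

theorem weightedSquares_le_of_isScalarTower {K : Type*} [Field K] [LinearOrder K]
    [IsStrictOrderedRing K] [Algebra F K] [Algebra K A] [IsScalarTower F K A]
    (hFK : ∀ c : F, 0 ≤ c → 0 ≤ algebraMap F K c) :
    weightedSquares F A ≤ weightedSquares K A := fun _ =>
  weightedSquares_induction (zero_mem _) (fun _ _ => add_mem) fun c a hc => by
    rw [← algebraMap_smul K c]
    exact smul_sq_mem_weightedSquares (hFK c hc) a

theorem nonneg_of_mem_weightedSquares {c : F} (hc : c ∈ weightedSquares F F) : 0 ≤ c :=
  weightedSquares_induction (p := fun c : F => 0 ≤ c) le_rfl (fun _ _ => add_nonneg)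
    (fun _ a hc => mul_nonneg hc (sq_nonneg a)) hc

theorem exists_linearOrder_algebraMap_nonneg {K : Type*} [Field K] [Algebra F K]
    (hK : -1 ∉ weightedSquares F K) :
    ∃ _ : LinearOrder K, IsStrictOrderedRing K ∧ ∀ c : F, 0 ≤ c → 0 ≤ algebraMap F K c := by
  obtain ⟨_, hord, hnonneg⟩ := exists_linearOrder_nonneg
    ({ weightedSquares F K with
        mem_of_isSquare' := by
          rintro _ ⟨a, rfl⟩
          have := smul_sq_mem_weightedSquares (zero_le_one (α := F)) a
          rwa [one_smul, sq] at this
        neg_one_notMem' := hK } : RingPreordering K)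
  refine ⟨_, hord, fun c hc => hnonneg _ ?_⟩
  have := smul_sq_mem_weightedSquares hc (1 : K)
  rwa [one_pow, ← Algebra.algebraMap_eq_smul_one] at this

theorem exists_mem_weightedSquares_of_mem_sSup {Ω : Type*} [Field Ω] [Algebra F Ω]
    {c : Set (IntermediateField F Ω)} (hc : c.Nonempty) (hdir : DirectedOn (· ≤ ·) c)
    {x : (sSup c : IntermediateField F Ω)}
    (hx : x ∈ weightedSquares F (sSup c : IntermediateField F Ω)) :
    ∃ E ∈ c, ∃ y ∈ weightedSquares F E, (y : Ω) = x := by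
  have hmem (x : (sSup c : IntermediateField F Ω)) : ∃ E ∈ c, (x : Ω) ∈ E := by
    have := hc.to_subtype
    have hx : (x : Ω) ∈ ((⨆ E : c, E : IntermediateField F Ω) : Set Ω) := sSup_eq_iSup' c ▸ x.2
    rw [IntermediateField.coe_iSup_of_directed hdir.directed_val] at hx
    simpa using hx
  refine weightedSquares_induction
    (p := fun x : (sSup c : IntermediateField F Ω) =>
      ∃ E ∈ c, ∃ y ∈ weightedSquares F E, (y : Ω) = x) ?_ ?_ ?_ hx
  · exact ⟨_, hc.some_mem, 0, zero_mem _, rfl⟩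
  · rintro x x' ⟨E, hE, y, hy, hyx⟩ ⟨E', hE', y', hy', hyx'⟩
    obtain ⟨E'', hE'', h, h'⟩ := hdir E hE E' hE'
    refine ⟨E'', hE'', _, add_mem (map_mem_weightedSquares (IntermediateField.inclusion h) hy)
      (map_mem_weightedSquares (IntermediateField.inclusion h') hy'), ?_⟩
    exact congrArg₂ (· + ·) hyx hyx'
  · intro r a hr
    obtain ⟨E, hE, ha⟩ := hmem a
    exact ⟨E, hE, _, smul_sq_mem_weightedSquares hr ⟨a, ha⟩, rfl⟩

theorem exists_maximal_neg_one_notMem_weightedSquares (F Ω : Type*) [Field F] [LinearOrder F]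
    [IsStrictOrderedRing F] [Field Ω] [Algebra F Ω] :
    ∃ E : IntermediateField F Ω,
      Maximal (fun E : IntermediateField F Ω => -1 ∉ weightedSquares F E) E := by
  refine (zorn_le_nonempty₀ {E : IntermediateField F Ω | -1 ∉ weightedSquares F E}
    (fun c hc hchain E hE => ⟨sSup c, fun h => ?_, fun _ => le_sSup⟩) ⊥ fun h => ?_).imp
      fun E => And.right
  · obtain ⟨E, hE, y, hy, h⟩ :=
      exists_mem_weightedSquares_of_mem_sSup ⟨E, hE⟩ hchain.directedOn h
    exact hc hE ((Subtype.ext h : y = -1) ▸ hy)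
  · have := map_mem_weightedSquares (IntermediateField.botEquiv F Ω).toAlgHom h
    rw [map_neg, map_one] at this
    exact (nonneg_of_mem_weightedSquares this).not_gt neg_one_lt_zero

end WeightedSquares

section RealClosure

open scoped Polynomial

variable {K : Type*} [Field K] [LinearOrder K] [IsStrictOrderedRing K]

theorem exists_mk_eq_of_mem_weightedSquares {f : K[X]} (hf : f.natDegree ≠ 0) {x : AdjoinRoot f}
    (hx : x ∈ weightedSquares K (AdjoinRoot f)) :
    ∃ g : K[X], g.natDegree ≤ 2 * (f.natDegree - 1) ∧ (∀ c, 0 ≤ g.eval c) ∧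
      AdjoinRoot.mk f g = x := by
  refine weightedSquares_induction (p := fun x => ∃ g : K[X], g.natDegree ≤ 2 * (f.natDegree - 1) ∧
    (∀ c, 0 ≤ g.eval c) ∧ AdjoinRoot.mk f g = x) ⟨0, by simp, by simp, by simp⟩ ?_ ?_ hx
  · rintro _ _ ⟨g, hg, hg', rfl⟩ ⟨h, hh, hh', rfl⟩
    exact ⟨g + h, Polynomial.natDegree_add_le_of_degree_le hg hh,
      fun c => by rw [Polynomial.eval_add]; exact add_nonneg (hg' c) (hh' c), map_add _ _ _⟩
  · intro r a hr
    obtain ⟨g, rfl⟩ := AdjoinRoot.mk_surjective a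
    have hg : (g % f).natDegree ≤ f.natDegree - 1 :=
      Nat.le_sub_one_of_lt (Polynomial.natDegree_mod_lt g hf)
    refine ⟨r • (g % f) ^ 2, (Polynomial.natDegree_smul_le _ _).trans
      (Polynomial.natDegree_pow_le_of_le 2 hg), fun c => ?_, ?_⟩
    · rw [Polynomial.eval_smul, Polynomial.eval_pow]
      exact mul_nonneg hr (sq_nonneg _)
    · have hgf : AdjoinRoot.mk f (g % f) = AdjoinRoot.mk f g := AdjoinRoot.mk_eq_mk.2
        ⟨-(g / f), by linear_combination EuclideanDomain.mod_add_div g f⟩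
      rw [← AdjoinRoot.smul_mk, map_pow, hgf]

theorem exists_forall_mul_pos_of_neg_one_mem_weightedSquares {f : K[X]} (hf : f.natDegree ≠ 0)
    (h : -1 ∈ weightedSquares K (AdjoinRoot f)) :
    ∃ g : K[X], g.natDegree < f.natDegree ∧ ∀ c, 0 < f.eval c * g.eval c := by
  obtain ⟨h, hdeg, hnonneg, hmk⟩ := exists_mk_eq_of_mem_weightedSquares hf h
  obtain ⟨g, hg⟩ : f ∣ 1 + h := by
    rw [← AdjoinRoot.mk_eq_zero, map_add, map_one, hmk, add_neg_cancel]
  have hpos (c : K) : 0 < f.eval c * g.eval c := by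
    rw [← Polynomial.eval_mul, ← hg, Polynomial.eval_add, Polynomial.eval_one]
    exact add_pos_of_pos_of_nonneg one_pos (hnonneg c)
  have hf0 : f ≠ 0 := by rintro rfl; simp at hf
  have hg0 : g ≠ 0 := by rintro rfl; simpa using hpos 0
  have hle : (1 + h).natDegree ≤ 2 * (f.natDegree - 1) :=
    Polynomial.natDegree_add_le_of_degree_le (by simp) hdeg
  rw [hg, Polynomial.natDegree_mul hf0 hg0] at hle
  exact ⟨g, by lia, hpos⟩

theorem exists_irreducible_dvd_mul_neg {f : K[X]} {a b : K} (hf : f.eval a * f.eval b < 0) :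
    ∃ g, Irreducible g ∧ g ∣ f ∧ g.eval a * g.eval b < 0 := by
  induction f using WfDvdMonoid.induction_on_irreducible with
  | zero => simp at hf
  | unit u hu =>
    obtain ⟨r, -, rfl⟩ := Polynomial.isUnit_iff.1 hu
    simp only [Polynomial.eval_C] at hf
    exact absurd hf (mul_self_nonneg r).not_gt
  | mul f g _ hg ih =>
    rw [Polynomial.eval_mul, Polynomial.eval_mul, mul_mul_mul_comm] at hf
    rcases mul_neg_iff.1 hf with ⟨-, hf⟩ | ⟨hg', -⟩
    · obtain ⟨h, hh, hhf, hneg⟩ := ih hf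
      exact ⟨h, hh, hhf.mul_left g, hneg⟩
    · exact ⟨g, hg, dvd_mul_right g f, hg'⟩

theorem exists_mem_Ioo_eval_eq_zero_of_degree_eq_one {f : K[X]} (hf : f.degree = 1) {a b : K}
    (hab : a < b) (hneg : f.eval a * f.eval b < 0) : ∃ c ∈ Set.Ioo a b, f.eval c = 0 := by
  obtain ⟨c, hc⟩ := Polynomial.exists_root_of_degree_eq_one hf
  obtain ⟨r, -, s, rfl⟩ :=
    Polynomial.natDegree_eq_one.1 (Polynomial.natDegree_eq_of_degree_eq_some hf)
  simp only [Polynomial.IsRoot, Polynomial.eval_add, Polynomial.eval_mul, Polynomial.eval_C,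
    Polynomial.eval_X] at hc hneg ⊢
  have hmul : r ^ 2 * ((a - c) * (b - c)) < 0 := by
    linear_combination hneg - (r * a + r * b - r * c + s) * hc
  rcases mul_neg_iff.1 (neg_of_mul_neg_right hmul (sq_nonneg r)) with ⟨ha, hb⟩ | ⟨ha, hb⟩
  · linarith
  · exact ⟨c, ⟨sub_neg.1 ha, sub_pos.1 hb⟩, hc⟩

/-- If `f` changes sign and `-1` is a weighted sum of squares modulo `f`, then `f * g` is positive
for some `g` of smaller degree. So `g` changes sign where `f` does, but has no root. -/
theorem hasIVT_of_forall_irreducible (h : ∀ f : K[X], Irreducible f →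
      -1 ∉ weightedSquares K (AdjoinRoot f) → f.degree = 1) : HasIVT K := by
  intro f a b hab hf
  induction hN : f.natDegree using Nat.strong_induction_on generalizing f with
  | _ N ih =>
  obtain ⟨g, hg, hgf, hneg⟩ := exists_irreducible_dvd_mul_neg hf
  suffices hroot : ∃ c ∈ Set.Ioo a b, g.eval c = 0 by
    obtain ⟨c, hc, hgc⟩ := hroot
    exact ⟨c, hc, Polynomial.eval_eq_zero_of_dvd_of_eval_eq_zero hgf hgc⟩
  by_cases hW : -1 ∈ weightedSquares K (AdjoinRoot g)
  · have hf0 : f ≠ 0 := by rintro rfl; simp at hf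
    obtain ⟨q, hq, hpos⟩ :=
      exists_forall_mul_pos_of_neg_one_mem_weightedSquares hg.natDegree_pos.ne' hW
    have hqneg : q.eval a * q.eval b < 0 := by
      have := mul_pos (hpos a) (hpos b)
      rw [mul_mul_mul_comm] at this
      exact neg_of_mul_pos_right this hneg.le
    obtain ⟨c, -, hqc⟩ := ih _ (hN ▸ hq.trans_le (Polynomial.natDegree_le_of_dvd hgf hf0)) q
      hqneg rfl
    exact absurd (hpos c) (by rw [hqc, mul_zero]; exact lt_irrefl 0)
  · exact exists_mem_Ioo_eval_eq_zero_of_degree_eq_one (h g hg hW) hab hneg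

theorem algebraMap_surjective_of_maximal {F Ω : Type*} [Field F] [LinearOrder F]
    [IsStrictOrderedRing F] [Field Ω] [IsAlgClosed Ω] [Algebra F Ω] {E : IntermediateField F Ω}
    (hE : Maximal (fun E : IntermediateField F Ω => -1 ∉ weightedSquares F E) E)
    [LinearOrder E] [IsStrictOrderedRing E] (hFE : ∀ c : F, 0 ≤ c → 0 ≤ algebraMap F E c)
    {L : Type*} [Field L] [Algebra E L] [Algebra.IsAlgebraic E L]
    (hL : -1 ∉ weightedSquares E L) : Function.Surjective (algebraMap E L) := by
  have : Module.IsTorsionFree E Ω := DivisionSemiring.to_moduleIsTorsionFree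
  let j : L →ₐ[E] Ω := IsAlgClosed.lift
  let := ((algebraMap E L).comp (algebraMap F E)).toAlgebra
  have : IsScalarTower F E L := IsScalarTower.of_algebraMap_eq fun _ => rfl
  let e : L ≃ₐ[E] j.fieldRange := AlgEquiv.ofInjectiveField j
  let E' : IntermediateField F Ω := j.fieldRange.restrictScalars F
  have hE' : -1 ∉ weightedSquares F E' := fun h => hL <| by
    have h' : e.symm (-1) ∈ weightedSquares E L := weightedSquares_le_of_isScalarTower hFE
      (map_mem_weightedSquares (A := E') ((e.symm : j.fieldRange →ₐ[E] L).restrictScalars F) h)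
    rwa [map_neg, map_one] at h'
  have hEE' : E ≤ E' := fun x hx => ⟨algebraMap E L ⟨x, hx⟩, j.commutes _⟩
  intro x
  refine ⟨⟨j x, hE.2 hE' hEE' ⟨x, rfl⟩⟩, j.toRingHom.injective ?_⟩
  exact j.commutes _

theorem exists_hasIVT_extension (F : Type*) [Field F] [LinearOrder F] [IsStrictOrderedRing F] :
    ∃ (E : IntermediateField F (AlgebraicClosure F)) (_ : LinearOrder E),
      IsStrictOrderedRing E ∧ HasIVT E ∧ ∀ c : F, 0 ≤ c → 0 ≤ algebraMap F E c := by
  obtain ⟨E, hE⟩ := exists_maximal_neg_one_notMem_weightedSquares F (AlgebraicClosure F)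
  obtain ⟨_, hord, hFE⟩ := exists_linearOrder_algebraMap_nonneg hE.prop
  refine ⟨E, _, hord, hasIVT_of_forall_irreducible fun f hf hW => ?_, hFE⟩
  have := Fact.mk hf
  have := (AdjoinRoot.powerBasis hf.ne_zero).finite
  obtain ⟨c, hc⟩ := algebraMap_surjective_of_maximal hE hFE hW (AdjoinRoot.root f)
  refine Polynomial.degree_eq_one_of_irreducible_of_root hf (x := c) ?_
  have := AdjoinRoot.eval₂_root f
  rw [← AdjoinRoot.algebraMap_eq, ← hc, Polynomial.eval₂_at_apply] at this
  exact (map_eq_zero _).1 this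

end RealClosure

section Positivstellensatz

universe u

theorem exists_ringHom_hasIVT_of_isOrdering {A : Type u} [CommRing A] (P : RingPreordering A)
    [P.IsOrdering] :
    ∃ (K : Type u) (_ : Field K) (_ : LinearOrder K) (_ : IsStrictOrderedRing K) (φ : A →+* K),
      HasIVT K ∧ (∀ a ∈ P, 0 ≤ φ a) ∧ ∀ a, φ a = 0 → a ∈ P.support := by
  obtain ⟨_, _, hnonneg⟩ := exists_linearOrder_nonneg (residuePreordering P)
  obtain ⟨E, _, hord, hE, hmono⟩ := exists_hasIVT_extension P.support.ResidueField
  refine ⟨E, inferInstance, _, hord,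
    (algebraMap P.support.ResidueField E).comp (algebraMap A P.support.ResidueField), hE,
    fun a ha => hmono _ (hnonneg _ (algebraMap_mem_residuePreordering ha)), fun a ha => ?_⟩
  rwa [RingHom.comp_apply, map_eq_zero, Ideal.algebraMap_residueField_eq_zero] at ha

variable {n m : ℕ}

theorem IsSOS.zero : IsSOS (0 : MvPolynomial (Fin n) ℝ) := ⟨0, Fin.elim0, by simp⟩

theorem IsSOS.sq (s : MvPolynomial (Fin n) ℝ) : IsSOS (s ^ 2) := ⟨1, fun _ => s, by simp⟩

theorem IsSOS.add {p q : MvPolynomial (Fin n) ℝ} (hp : IsSOS p) (hq : IsSOS q) :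
    IsSOS (p + q) := by
  obtain ⟨N, s, rfl⟩ := hp
  obtain ⟨M, t, rfl⟩ := hq
  exact ⟨N + M, Fin.append s t, by simp [Fin.sum_univ_add]⟩

theorem IsSOS.eval_nonneg {p : MvPolynomial (Fin n) ℝ} (hp : IsSOS p) (x : Fin n → ℝ) :
    0 ≤ eval x p := by
  obtain ⟨N, s, rfl⟩ := hp
  rw [map_sum]
  exact Finset.sum_nonneg fun i _ => by rw [map_pow]; exact sq_nonneg _

theorem InPreorder.eval_nonneg {b : Fin m → MvPolynomial (Fin n) ℝ} {p : MvPolynomial (Fin n) ℝ}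
    (hp : InPreorder b p) {x : Fin n → ℝ} (hx : ∀ i, 0 ≤ eval x (b i)) : 0 ≤ eval x p := by
  obtain ⟨σ, hσ, rfl⟩ := hp
  rw [map_sum]
  refine Finset.sum_nonneg fun J _ => ?_
  rw [map_mul, map_prod]
  exact mul_nonneg ((hσ J).eval_nonneg x) (Finset.prod_nonneg fun i _ => hx i)

/-- The preorder generated by `b`, as the subsemiring of sums of terms `s ^ 2 * ∏ i ∈ J, b i`. -/
noncomputable def preorderSubsemiring (b : Fin m → MvPolynomial (Fin n) ℝ) :
    Subsemiring (MvPolynomial (Fin n) ℝ) :=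
  Submonoid.subsemiringClosure
    { carrier := {p | ∃ (s : MvPolynomial (Fin n) ℝ) (J : Finset (Fin m)),
        p = s ^ 2 * ∏ i ∈ J, b i}
      one_mem' := ⟨1, ∅, by simp⟩
      mul_mem' := by
        rintro _ _ ⟨s, J, rfl⟩ ⟨t, J', rfl⟩
        refine ⟨s * t * ∏ i ∈ J ∩ J', b i, (J ∪ J') \ (J ∩ J'), ?_⟩
        have hunion := Finset.prod_union_inter (s₁ := J) (s₂ := J') (f := b)
        have hsdiff := Finset.prod_sdiff
          (Finset.inter_subset_union : J ∩ J' ⊆ J ∪ J') (f := b)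
        linear_combination -s ^ 2 * t ^ 2 * hunion - s ^ 2 * t ^ 2 * (∏ i ∈ J ∩ J', b i) * hsdiff }

theorem sq_mem_preorderSubsemiring (b : Fin m → MvPolynomial (Fin n) ℝ)
    (s : MvPolynomial (Fin n) ℝ) : s ^ 2 ∈ preorderSubsemiring b := by
  rw [preorderSubsemiring, Submonoid.subsemiringClosure_mem]
  exact AddSubmonoid.subset_closure ⟨s, ∅, by simp⟩

theorem mem_preorderSubsemiring (b : Fin m → MvPolynomial (Fin n) ℝ) (i : Fin m) :
    b i ∈ preorderSubsemiring b := by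
  rw [preorderSubsemiring, Submonoid.subsemiringClosure_mem]
  exact AddSubmonoid.subset_closure ⟨1, {i}, by simp⟩

theorem inPreorder_of_mem_preorderSubsemiring {b : Fin m → MvPolynomial (Fin n) ℝ}
    {p : MvPolynomial (Fin n) ℝ} (hp : p ∈ preorderSubsemiring b) : InPreorder b p := by
  rw [preorderSubsemiring, Submonoid.subsemiringClosure_mem] at hp
  induction hp using AddSubmonoid.closure_induction with
  | mem p hp =>
    obtain ⟨s, J, rfl⟩ := hp
    refine ⟨fun J' => if J' = J then s ^ 2 else 0, fun J' => ?_, by simp⟩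
    dsimp only
    split_ifs
    exacts [.sq s, .zero]
  | zero => exact ⟨fun _ => 0, fun _ => .zero, by simp⟩
  | add p q _ _ hp hq =>
    obtain ⟨σ, hσ, rfl⟩ := hp
    obtain ⟨τ, hτ, rfl⟩ := hq
    exact ⟨fun J => σ J + τ J, fun J => (hσ J).add (hτ J), by
      simp only [add_mul, Finset.sum_add_distrib]⟩

theorem exists_eval_nonneg_and_neg_of_isOrdering {b : Fin m → MvPolynomial (Fin n) ℝ}
    {p : MvPolynomial (Fin n) ℝ} (P : RingPreordering (MvPolynomial (Fin n) ℝ)) [P.IsOrdering]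
    (hb : ∀ i, b i ∈ P) (hp : -p ∈ P) (hp' : p ∉ P.support) :
    ∃ x : Fin n → ℝ, (∀ i, 0 ≤ eval x (b i)) ∧ eval x p < 0 := by
  classical
  obtain ⟨K, _, _, _, φ, hK, hnonneg, hzero⟩ := exists_ringHom_hasIVT_of_isOrdering P
  let := (φ.comp C).toAlgebra
  have hφ (q : MvPolynomial (Fin n) ℝ) : aeval (fun i => φ (X i)) q = φ q := by
    conv_rhs => rw [← eval₂_eta q, eval₂_comp_left]
    rfl
  obtain ⟨x, hx⟩ := hasIVT_real.exists_sign_eval_eq_sign_aeval hK (fun i => φ (X i))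
    (insert p (univ.image b))
  simp only [hφ] at hx
  refine ⟨x, fun i => ?_, ?_⟩
  · rw [← sign_nonneg_iff, hx _ (by simp), sign_nonneg_iff]
    exact hnonneg _ (hb i)
  · have hφp : φ p ≤ 0 := by
      rw [← Left.nonneg_neg_iff, ← map_neg]
      exact hnonneg _ hp
    rw [← sign_eq_neg_one_iff, hx _ (by simp), sign_eq_neg_one_iff]
    exact hφp.lt_of_ne fun h => hp' (hzero p h)

/-- The **Positivstellensatz** of Krivine and Stengle. -/
theorem exists_inPreorder_mul_eq_pow_add {b : Fin m → MvPolynomial (Fin n) ℝ}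
    {p : MvPolynomial (Fin n) ℝ}
    (h : ∀ x : Fin n → ℝ, (∀ i, 0 ≤ eval x (b i)) → 0 ≤ eval x p) :
    ∃ (k : ℕ) (q r : MvPolynomial (Fin n) ℝ),
      InPreorder b q ∧ InPreorder b r ∧ q * p = p ^ (2 * k) + r := by
  by_contra! hcert
  have hsq := sq_mem_preorderSubsemiring b
  have hproper : adjoinOfSq (preorderSubsemiring b) hsq (-p) ∈ properCones p := by
    refine ⟨fun a => ⟨a ^ 2, hsq a, 0, Subsemiring.zero_mem _, by ring⟩, ?_⟩
    rintro k ⟨r, hr, q, hq, hk⟩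
    exact hcert k q r (inPreorder_of_mem_preorderSubsemiring hq)
      (inPreorder_of_mem_preorderSubsemiring hr) (by linear_combination hk)
  obtain ⟨P, _, hP, hpP⟩ := exists_isOrdering_of_mem_properCones hproper
  obtain ⟨x, hx, hneg⟩ := exists_eval_nonneg_and_neg_of_isOrdering (b := b) P
    (fun i => hP (le_adjoinOfSq hsq _ (mem_preorderSubsemiring b i)))
    (hP (mem_adjoinOfSq hsq _)) hpP
  exact hneg.not_ge (h x hx)

theorem InPreorder.exists_neg_of_mul_eq_pow_add {b : Fin m → MvPolynomial (Fin n) ℝ}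
    {p q r : MvPolynomial (Fin n) ℝ} {k : ℕ} (hq : InPreorder b q) (hr : InPreorder b r)
    (h : q * p = p ^ (2 * k) + r) {x : Fin n → ℝ} (hx : eval x p < 0) :
    ∃ i, eval x (b i) < 0 := by
  by_contra! hb
  have heval := congrArg (eval x) h
  rw [map_mul, map_add, map_pow] at heval
  have hpow : 0 < eval x p ^ (2 * k) := (even_two_mul k).pow_pos hx.ne
  have hmul := mul_nonpos_of_nonneg_of_nonpos (hq.eval_nonneg hb) hx.le
  linarith [hr.eval_nonneg hb]

theorem forall_neg_imp_exists_neg_iff_exists_inPreorder {b : Fin m → MvPolynomial (Fin n) ℝ}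
    {p : MvPolynomial (Fin n) ℝ} :
    (∀ x : Fin n → ℝ, eval x p < 0 → ∃ i, eval x (b i) < 0) ↔
      ∃ (k : ℕ) (q r : MvPolynomial (Fin n) ℝ),
        InPreorder b q ∧ InPreorder b r ∧ q * p = p ^ (2 * k) + r := by
  refine ⟨fun h => exists_inPreorder_mul_eq_pow_add fun x hx => ?_, ?_⟩
  · contrapose! hx
    exact h x hx
  · rintro ⟨k, q, r, hq, hr, hqr⟩ x hx
    exact hq.exists_neg_of_mul_eq_pow_add hr hqr hx

end Positivstellensatz

section ControlLyapunov

variable {n nu m : ℕ} (V : MvPolynomial (Fin n) ℝ) (f : Fin n → MvPolynomial (Fin n) ℝ)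
  (g : Fin n → Fin nu → MvPolynomial (Fin n) ℝ)

theorem VdotFun_eq_linearCombination_add (x : Fin n → ℝ) (u : Fin nu → ℝ) :
    VdotFun V f g x u = Fintype.linearCombination ℝ
      (fun j => ∑ i, eval x (pderiv i V) * eval x (g i j)) u + VdotFun V f g x 0 := by
  simp only [VdotFun, VdotPoly, map_sum, map_mul, map_add, eval_C, mul_add, Finset.mul_sum,
    Finset.sum_add_distrib, Pi.zero_apply, zero_mul, mul_zero, Finset.sum_const_zero, add_zero,
    Fintype.linearCombination_apply, smul_eq_mul]
  rw [Finset.sum_comm, add_comm]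
  simp only [mul_left_comm]

theorem concaveOn_VdotFun {s : Set (Fin nu → ℝ)} (hs : Convex ℝ s) (x : Fin n → ℝ) :
    ConcaveOn ℝ s (VdotFun V f g x) := by
  rw [_root_.funext (VdotFun_eq_linearCombination_add V f g x)]
  exact (LinearMap.concaveOn _ hs).add_const _

theorem exists_mem_convexHull_VdotFun_lt_iff {uvert : Fin m → Fin nu → ℝ} {x : Fin n → ℝ} {c : ℝ} :
    (∃ u ∈ convexHull ℝ (Set.range uvert), VdotFun V f g x u < c) ↔
      ∃ i, VdotFun V f g x (uvert i) < c := by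
  constructor
  · rintro ⟨u, hu, hlt⟩
    obtain ⟨_, ⟨i, rfl⟩, hi⟩ := (concaveOn_VdotFun V f g convex_univ x).exists_le_of_mem_convexHull
      (Set.subset_univ _) hu
    exact ⟨i, hi.trans_lt hlt⟩
  · rintro ⟨i, hi⟩
    exact ⟨_, subset_convexHull ℝ _ ⟨i, rfl⟩, hi⟩

theorem eval_mul_sum_sq_neg_iff (ρ : ℝ) (x : Fin n → ℝ) :
    eval x ((V - C ρ) * ∑ i, (X i : MvPolynomial (Fin n) ℝ) ^ 2) < 0 ↔ eval x V < ρ ∧ x ≠ 0 := by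
  have hnonneg : 0 ≤ ∑ i, x i ^ 2 := Finset.sum_nonneg fun i _ => sq_nonneg (x i)
  have hpos : 0 < ∑ i, x i ^ 2 ↔ x ≠ 0 := by
    rw [hnonneg.lt_iff_ne', not_iff_not,
      Finset.sum_eq_zero_iff_of_nonneg fun i _ => sq_nonneg (x i)]
    simp [_root_.funext_iff]
  simp only [map_mul, map_sub, map_sum, map_pow, eval_C, eval_X]
  rw [mul_neg_iff, hpos, sub_neg, and_comm, or_iff_right fun h => hnonneg.not_gt h.1]

end ControlLyapunov

theorem clf_iff_psatz_certificate_general {n nu m : ℕ} (V : MvPolynomial (Fin n) ℝ)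
    (f : Fin n → MvPolynomial (Fin n) ℝ) (g : Fin n → Fin nu → MvPolynomial (Fin n) ℝ)
    (uvert : Fin m → Fin nu → ℝ) (ρ κV : ℝ) :
    (∀ x : Fin n → ℝ, eval x V < ρ → x ≠ 0 →
        ∃ u ∈ convexHull ℝ (Set.range uvert), VdotFun V f g x u < -κV * eval x V)
    ↔ ∃ (k : ℕ) (q r : MvPolynomial (Fin n) ℝ),
        InPreorder (fun i => VdotPoly V f g (uvert i) + C κV * V) q ∧
        InPreorder (fun i => VdotPoly V f g (uvert i) + C κV * V) r ∧
        q * ((V - C ρ) * ∑ i, (X i : MvPolynomial (Fin n) ℝ) ^ 2)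
          = ((V - C ρ) * ∑ i, (X i : MvPolynomial (Fin n) ℝ) ^ 2) ^ (2 * k) + r := by
  rw [← forall_neg_imp_exists_neg_iff_exists_inPreorder]
  refine forall_congr' fun x => ?_
  rw [eval_mul_sum_sq_neg_iff, and_imp, exists_mem_convexHull_VdotFun_lt_iff]
  have hvert (i : Fin m) : eval x (VdotPoly V f g (uvert i) + C κV * V) < 0 ↔
      VdotFun V f g x (uvert i) < -κV * eval x V := by
    rw [map_add, map_mul, eval_C, VdotFun, neg_mul, lt_neg_iff_add_neg]
  simp only [hvert]

theorem clf_iff_psatz_certificate {n nu m : ℕ}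
    (V : MvPolynomial (Fin n) ℝ)
    (f : Fin n → MvPolynomial (Fin n) ℝ) (g : Fin n → Fin nu → MvPolynomial (Fin n) ℝ)
    (uvert : Fin m → Fin nu → ℝ)
    (ε : ℝ) (hε : 0 < ε) (α : ℕ) (hα : 0 < α)
    (hVpos : ∀ x : Fin n → ℝ, eval x V ≥ ε * (∑ i, x i ^ 2) ^ α)
    (hV0 : eval (0 : Fin n → ℝ) V = 0)
    (ρ κV : ℝ) (hρ : 0 < ρ) (hκ : 0 < κV) :
    (∀ x : Fin n → ℝ, eval x V < ρ → x ≠ 0 →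
        ∃ u ∈ convexHull ℝ (Set.range uvert), VdotFun V f g x u < -κV * eval x V)
    ↔ ∃ (k : ℕ) (q r : MvPolynomial (Fin n) ℝ),
        InPreorder (fun i => VdotPoly V f g (uvert i) + C κV * V) q ∧
        InPreorder (fun i => VdotPoly V f g (uvert i) + C κV * V) r ∧
        q * ((V - C ρ) * ∑ i, (X i : MvPolynomial (Fin n) ℝ) ^ 2)
          = ((V - C ρ) * ∑ i, (X i : MvPolynomial (Fin n) ℝ) ^ 2) ^ (2 * k) + r :=
  clf_iff_psatz_certificate_general V f g uvert ρ κV
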